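/- arXiv:2008.11321 — 4 statements merged into one kernel-verified Lean document; each statement's English description precedes it below -/
import Mathlib

section
/- In the ADG peeling process with parameter ε > 0, every iteration removes at least an ε/(1+ε) fraction of the remaining vertices, i.e. |U_{i+1}| ≤ |U_i|/(1+ε) for every i ≥ 0; consequently |U_i| ≤ n/(1+ε)^i for all i, and U_i = ∅ whenever (1+ε)^i > n. -/
/-- The degree of `v` in the subgraph of `G` induced by the vertex set `U`. -/
def SimpleGraph.degIn {V : Type*} [DecidableEq V] (G : SimpleGraph V) [DecidableRel G.Adj]
    (U : Finset V) (v : V) : ℕ :=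
  (U.filter (fun u => G.Adj v u)).card

/-- The average degree of the subgraph of `G` induced by the vertex set `U`. -/
noncomputable def SimpleGraph.avgDegIn {V : Type*} [DecidableEq V] (G : SimpleGraph V)
    [DecidableRel G.Adj] (U : Finset V) : ℝ :=
  (∑ v ∈ U, (G.degIn U v : ℝ)) / U.card

/-!
Each step is Markov's inequality for the uniform measure on `U i`, with `c = 1 + ε`: at most a
fraction `1 / c` of the elements of a finite set have weight exceeding `c` times the average weight.
When the average vanishes, this relies on exceeding being strict: all weights are then zero
and no element survives. Nothing about degrees enters except that they are nonnegative.
-/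

open Finset
open scoped BigOperators

theorem mul_card_filter_lt_le_sum {α R : Type*} [Semiring R] [LinearOrder R] [IsOrderedRing R]
    {s : Finset α} {f : α → R} (hf : ∀ x ∈ s, 0 ≤ f x) (t : R) :
    t * #{x ∈ s | t < f x} ≤ ∑ x ∈ s, f x :=
  calc
    t * #{x ∈ s | t < f x} = #{x ∈ s | t < f x} • t := (nsmul_eq_mul' _ _).symm
    _ ≤ ∑ x ∈ s with t < f x, f x :=
      card_nsmul_le_sum _ _ _ fun _ hx ↦ (mem_filter.mp hx).2.le
    _ ≤ ∑ x ∈ s, f x :=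
      sum_le_sum_of_subset_of_nonneg (filter_subset _ _) fun x hx _ ↦ hf x hx

section OrderedField

variable {α K : Type*} [Field K] [LinearOrder K] [IsStrictOrderedRing K]

theorem card_filter_mul_expect_lt_le_card_div {s : Finset α} {f : α → K}
    (hf : ∀ x ∈ s, 0 ≤ f x) {c : K} (hc : 0 < c) :
    (#{x ∈ s | c * 𝔼 y ∈ s, f y < f x} : K) ≤ #s / c := by
  obtain h_zero | h_pos := (expect_nonneg hf).eq_or_lt
  · have h_empty : ({x ∈ s | c * 𝔼 y ∈ s, f y < f x} : Finset α) = ∅ := by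
      have hf_zero := (expect_eq_zero_iff_of_nonneg hf).mp h_zero.symm
      refine filter_eq_empty_iff.mpr fun x hx ↦ ?_
      rw [← h_zero, hf_zero x hx, mul_zero]
      exact lt_irrefl 0
    rw [h_empty, card_empty, Nat.cast_zero]
    positivity
  · rw [le_div_iff₀ hc]
    refine le_of_mul_le_mul_right ?_ h_pos
    calc
      (#{x ∈ s | c * 𝔼 y ∈ s, f y < f x} : K) * c * 𝔼 y ∈ s, f y
          = c * (𝔼 y ∈ s, f y) * #{x ∈ s | c * 𝔼 y ∈ s, f y < f x} := by ring
      _ ≤ ∑ x ∈ s, f x := mul_card_filter_lt_le_sum hf _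
      _ = #s * 𝔼 y ∈ s, f y := (card_mul_expect s f).symm

theorem le_div_pow_of_succ_le_div {u : ℕ → K} {c : K} (hc : 0 ≤ c)
    (hu : ∀ i, u (i + 1) ≤ u i / c) (i : ℕ) : u i ≤ u 0 / c ^ i := by
  induction i with
  | zero => rw [pow_zero, div_one]
  | succ i ih =>
    calc
      u (i + 1) ≤ u i / c := hu i
      _ ≤ u 0 / c ^ i / c := by gcongr
      _ = u 0 / c ^ (i + 1) := by rw [div_div, pow_succ]

theorem adg_peeling_geometric_decrease_general {c : K} (hc : 0 < c)
    (U : ℕ → Finset α) (w : ℕ → α → K) (hw : ∀ i, ∀ v ∈ U i, 0 ≤ w i v)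
    (hUstep : ∀ i, U (i + 1) = {v ∈ U i | c * 𝔼 u ∈ U i, w i u < w i v}) :
    (∀ i, (#(U (i + 1)) : K) ≤ #(U i) / c)
    ∧ (∀ i, (#(U i) : K) ≤ #(U 0) / c ^ i)
    ∧ (∀ i, (#(U 0) : K) < c ^ i → U i = ∅) := by
  have h_step (i : ℕ) : (#(U (i + 1)) : K) ≤ #(U i) / c := by
    rw [hUstep i]
    exact card_filter_mul_expect_lt_le_card_div (hw i) hc
  have h_pow (i : ℕ) : (#(U i) : K) ≤ #(U 0) / c ^ i :=
    le_div_pow_of_succ_le_div (u := fun j ↦ (#(U j) : K)) hc.le h_step i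
  refine ⟨h_step, h_pow, fun i hi ↦ ?_⟩
  have h_lt_one : (#(U i) : K) < 1 := (h_pow i).trans_lt ((div_lt_one (pow_pos hc i)).mpr hi)
  exact card_eq_zero.mp (Nat.lt_one_iff.mp (mod_cast h_lt_one))

end OrderedField

theorem avgDegIn_eq_expect_degIn {V : Type*} [DecidableEq V] (G : SimpleGraph V)
    [DecidableRel G.Adj] (U : Finset V) : G.avgDegIn U = 𝔼 v ∈ U, (G.degIn U v : ℝ) :=
  (expect_eq_sum_div_card _ _).symm

/-- In the ADG peeling process with parameter `ε > 0` (with `U 0 = V` and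
`U (i+1) = U i \ R i`, where `R i` is the set of vertices of `U i` whose induced degree is
at most `(1+ε)` times the average induced degree of `U i`), every iteration removes at
least an `ε/(1+ε)` fraction of the remaining vertices, i.e. `|U (i+1)| ≤ |U i|/(1+ε)`;
consequently `|U i| ≤ n/(1+ε)^i` for all `i`, and `U i = ∅` whenever `(1+ε)^i > n`. -/
theorem adg_peeling_geometric_decrease {V : Type*} [Fintype V] [DecidableEq V]
    (G : SimpleGraph V) [DecidableRel G.Adj] (ε : ℝ) (hε : 0 < ε)
    (U : ℕ → Finset V)
    (hU0 : U 0 = Finset.univ)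
    (hUstep : ∀ i, U (i + 1) =
      U i \ (U i).filter (fun v => (G.degIn (U i) v : ℝ) ≤ (1 + ε) * G.avgDegIn (U i))) :
    (∀ i, ((U (i + 1)).card : ℝ) ≤ ((U i).card : ℝ) / (1 + ε))
    ∧ (∀ i, ((U i).card : ℝ) ≤ (Fintype.card V : ℝ) / (1 + ε) ^ i)
    ∧ (∀ i, (Fintype.card V : ℝ) < (1 + ε) ^ i → U i = ∅) := by
  simpa only [hU0, card_univ] using
    adg_peeling_geometric_decrease_general (by positivity : 0 < 1 + ε) U
      (fun i v ↦ G.degIn (U i) v) (fun _ _ _ ↦ Nat.cast_nonneg _) fun i ↦ by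
        simp only [hUstep i, ← filter_not, not_le, avgDegIn_eq_expect_degIn]
end

section
/- If G is d-degenerate, then the ADG peeling process with parameter ε > 0 produces a partial 2(1+ε)-approximate degeneracy ordering: every vertex v removed in iteration i (that is, v ∈ R_i) satisfies deg_{U_i}(v) ≤ 2(1+ε)·d, so under the ordering ρ(v) = i every vertex has at most 2(1+ε)·d neighbors of equal or higher rank. -/
section DegIn

variable {V : Type*} [DecidableEq V] (G : SimpleGraph V) [DecidableRel G.Adj]
  {S : Finset V} {v : V}

theorem degIn_erase_self : G.degIn (S.erase v) v = G.degIn S v := by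
  rw [SimpleGraph.degIn, Finset.filter_erase, Finset.erase_eq_of_notMem (by simp),
    SimpleGraph.degIn]

theorem degIn_erase_add_ite (hv : v ∈ S) (u : V) :
    G.degIn (S.erase v) u + (if G.Adj u v then 1 else 0) = G.degIn S u := by
  simp only [SimpleGraph.degIn, Finset.card_filter]
  exact Finset.sum_erase_add S (fun w => if G.Adj u w then 1 else 0) hv

theorem sum_ite_adj_eq_degIn (S : Finset V) (v : V) :
    ∑ u ∈ S, (if G.Adj u v then 1 else 0) = G.degIn S v := by
  simp only [SimpleGraph.degIn, Finset.card_filter, G.adj_comm v]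

theorem sum_degIn_eq_sum_erase_add (hv : v ∈ S) :
    ∑ u ∈ S, G.degIn S u = ∑ u ∈ S.erase v, G.degIn (S.erase v) u + 2 * G.degIn S v :=
  calc
    ∑ u ∈ S, G.degIn S u
      = ∑ u ∈ S, (G.degIn (S.erase v) u + if G.Adj u v then 1 else 0) :=
        Finset.sum_congr rfl fun u _ => (degIn_erase_add_ite G hv u).symm
    _ = ∑ u ∈ S, G.degIn (S.erase v) u + G.degIn S v := by
        rw [Finset.sum_add_distrib, sum_ite_adj_eq_degIn]
    _ = ∑ u ∈ S.erase v, G.degIn (S.erase v) u + G.degIn S v + G.degIn S v := by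
        rw [← Finset.sum_erase_add S _ hv, degIn_erase_self]
    _ = ∑ u ∈ S.erase v, G.degIn (S.erase v) u + 2 * G.degIn S v := by ring

end DegIn

/-- The subgraph of `G` induced by the finite set `S` is `d`-degenerate. Degeneracy is stated
locally, through the nonempty subsets of `S`, so that `G` itself may be infinite and the degree
sum over `S` can be bounded by deleting one low-degree vertex at a time. -/
def IsDegenerateOn {V : Type*} [DecidableEq V] (G : SimpleGraph V) [DecidableRel G.Adj]
    (d : ℕ) (S : Finset V) : Prop :=
  ∀ T ⊆ S, T.Nonempty → ∃ v ∈ T, G.degIn T v ≤ d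

namespace IsDegenerateOn

variable {V : Type*} [DecidableEq V] {G : SimpleGraph V} [DecidableRel G.Adj]
  {d : ℕ} {S T : Finset V}

theorem mono (hS : IsDegenerateOn G d S) (hTS : T ⊆ S) : IsDegenerateOn G d T :=
  fun R hRT => hS R (hRT.trans hTS)

theorem sum_degIn_le (hS : IsDegenerateOn G d S) :
    ∑ v ∈ S, G.degIn S v ≤ 2 * d * S.card := by
  induction S using Finset.strongInduction with
  | H S ih =>
    obtain rfl | hne := S.eq_empty_or_nonempty
    · simp
    obtain ⟨v, hv, hvd⟩ := hS S subset_rfl hne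
    have hsum_erase := ih (S.erase v) (Finset.erase_ssubset hv) (hS.mono (S.erase_subset v))
    calc
      ∑ u ∈ S, G.degIn S u
        = ∑ u ∈ S.erase v, G.degIn (S.erase v) u + 2 * G.degIn S v :=
          sum_degIn_eq_sum_erase_add G hv
      _ ≤ 2 * d * (S.erase v).card + 2 * d := by gcongr
      _ = 2 * d * S.card := by rw [← Finset.card_erase_add_one hv]; ring

-- For `S = ∅` the average degree is `0 / 0 = 0`.
theorem avgDegIn_le (hS : IsDegenerateOn G d S) : G.avgDegIn S ≤ 2 * d :=
  div_le_of_le_mul₀ (by positivity) (by positivity) (mod_cast hS.sum_degIn_le)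

end IsDegenerateOn

theorem adg_peeling_approx_degeneracy_ordering_general {V : Type*} [DecidableEq V]
    {G : SimpleGraph V} [DecidableRel G.Adj] {d : ℕ} {S : Finset V} (hS : IsDegenerateOn G d S)
    {c : ℝ} (hc : 0 ≤ c) {v : V} (hv : (G.degIn S v : ℝ) ≤ c * G.avgDegIn S) :
    (G.degIn S v : ℝ) ≤ 2 * c * d :=
  calc
    (G.degIn S v : ℝ) ≤ c * G.avgDegIn S := hv
    _ ≤ c * (2 * d) := by gcongr; exact hS.avgDegIn_le
    _ = 2 * c * d := by ring

/-- If `G` is `d`-degenerate, then the ADG peeling process with parameter `ε > 0`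
(with `U 0 = V` and `U (i+1) = U i \ R i`, where `R i` is the set of vertices of `U i`
whose induced degree is at most `(1+ε)` times the average induced degree of `U i`)
produces a partial `2(1+ε)`-approximate degeneracy ordering: every vertex `v ∈ R i`
removed in iteration `i` satisfies `deg_{U i}(v) ≤ 2(1+ε)d`, i.e. under the ordering
`ρ(v) = i` every vertex has at most `2(1+ε)d` neighbors of equal or higher rank. -/
theorem adg_peeling_approx_degeneracy_ordering {V : Type*} [Fintype V] [DecidableEq V]
    (G : SimpleGraph V) [DecidableRel G.Adj] (d : ℕ)
    (hdeg : ∀ U : Finset V, U.Nonempty → ∃ v ∈ U, G.degIn U v ≤ d)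
    (ε : ℝ) (hε : 0 < ε)
    (U : ℕ → Finset V)
    (hU0 : U 0 = Finset.univ)
    (hUstep : ∀ i, U (i + 1) =
      U i \ (U i).filter (fun v => (G.degIn (U i) v : ℝ) ≤ (1 + ε) * G.avgDegIn (U i))) :
    ∀ i, ∀ v ∈ (U i).filter (fun v => (G.degIn (U i) v : ℝ) ≤ (1 + ε) * G.avgDegIn (U i)),
      (G.degIn (U i) v : ℝ) ≤ 2 * (1 + ε) * d := by
  intro i v hv
  exact adg_peeling_approx_degeneracy_ordering_general (fun T _ => hdeg T) (by positivity)
    (Finset.mem_filter.mp hv).2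
end

section
/- If G is d-degenerate, then for every nonempty subset U ⊆ V at least ⌈|U|/2⌉ vertices v ∈ U satisfy deg_U(v) ≤ 4d; in particular, removing from U a half of its vertices of lowest induced degree removes only vertices of induced degree at most 4d, so the median-based peeling process ADG-M produces a partial 4-approximate degeneracy ordering. -/
/-!
Repeatedly deleting a vertex of induced degree at most `d` exhausts `U`, and each deletion lowers
the sum of the induced degrees by at most `2d`, so the average induced degree in `U` is at most
`2d`. By Markov's inequality, at most half of the vertices of `U` exceed twice that average.
-/

section Markov

open Finset

variable {ι M : Type*} [AddCommMonoid M] [LinearOrder M] [IsOrderedCancelAddMonoid M]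

theorem mul_card_filter_nsmul_lt_le_card {s : Finset ι} {f : ι → M} {a : M} (c : ℕ)
    (hf : ∀ i ∈ s, 0 ≤ f i) (hsum : ∑ i ∈ s, f i ≤ #s • a) :
    c * #{i ∈ s | c • a < f i} ≤ #s := by
  set t := {i ∈ s | c • a < f i}
  by_contra! hlt
  have ht : t.Nonempty := card_pos.mp (pos_of_mul_pos_right (Nat.zero_lt_of_lt hlt) c.zero_le)
  have hs : #s ≠ 0 := (ht.mono (filter_subset _ s)).card_ne_zero
  have ha : 0 ≤ a := (nsmul_nonneg_iff hs).mp ((sum_nonneg hf).trans hsum)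
  have : #s • a < #s • a := calc
    #s • a ≤ (c * #t) • a := nsmul_le_nsmul_left ha hlt.le
    _ = ∑ _i ∈ t, c • a := by rw [sum_const, mul_nsmul]
    _ < ∑ i ∈ t, f i := sum_lt_sum_of_nonempty ht fun i hi => (mem_filter.mp hi).2
    _ ≤ ∑ i ∈ s, f i := sum_le_sum_of_subset_of_nonneg (filter_subset _ s) fun i hi _ => hf i hi
    _ ≤ #s • a := hsum
  exact this.false

end Markov

section Degeneracy

open Finset

variable {V : Type*} (G : SimpleGraph V) [DecidableRel G.Adj]

/-- The induced degree `deg_U(v)`: the number of neighbors of `v` in `U`. The vertex `v` itself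
need not belong to `U`. -/
def inducedDegree (U : Finset V) (v : V) : ℕ :=
  #{u ∈ U | G.Adj v u}

/-- `G` is `d`-degenerate: every nonempty finite set of vertices contains a vertex of induced degree
at most `d`. Only finite sets are tested, so that the notion also makes sense on infinite graphs. -/
def IsDegenerate (d : ℕ) : Prop :=
  ∀ U : Finset V, U.Nonempty → ∃ v ∈ U, inducedDegree G U v ≤ d

theorem inducedDegree_erase_add [DecidableEq V] {U : Finset V} {v : V} (hv : v ∈ U) (u : V) :
    inducedDegree G (U.erase v) u + (if G.Adj u v then 1 else 0) = inducedDegree G U u := by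
  simp only [inducedDegree, card_filter]
  exact sum_erase_add U _ hv

theorem inducedDegree_erase_self [DecidableEq V] {U : Finset V} {v : V} (hv : v ∈ U) :
    inducedDegree G (U.erase v) v = inducedDegree G U v := by
  simpa using inducedDegree_erase_add G hv v

theorem sum_inducedDegree_erase_add [DecidableEq V] {U : Finset V} {v : V} (hv : v ∈ U) :
    ∑ u ∈ U.erase v, inducedDegree G (U.erase v) u + 2 * inducedDegree G U v =
      ∑ u ∈ U, inducedDegree G U u := by
  have neighbors_of_v :
      ∑ u ∈ U.erase v, (if G.Adj u v then 1 else 0) = inducedDegree G U v := by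
    simp only [G.adj_comm _ v, ← card_filter]
    exact inducedDegree_erase_self G hv
  symm
  calc
    ∑ u ∈ U, inducedDegree G U u
      = ∑ u ∈ U.erase v, inducedDegree G U u + inducedDegree G U v := (sum_erase_add U _ hv).symm
    _ = ∑ u ∈ U.erase v, (inducedDegree G (U.erase v) u + if G.Adj u v then 1 else 0) +
          inducedDegree G U v := by simp only [inducedDegree_erase_add G hv]
    _ = ∑ u ∈ U.erase v, inducedDegree G (U.erase v) u + 2 * inducedDegree G U v := by
      rw [sum_add_distrib, neighbors_of_v, add_assoc, two_mul]

variable {G} {d : ℕ}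

theorem IsDegenerate.sum_inducedDegree_le (hG : IsDegenerate G d) (U : Finset V) :
    ∑ v ∈ U, inducedDegree G U v ≤ #U * (2 * d) := by
  classical
  induction U using Finset.strongInduction with
  | H U ih =>
    rcases U.eq_empty_or_nonempty with rfl | hU
    · simp
    obtain ⟨v, hv, hvd⟩ := hG U hU
    calc
      ∑ u ∈ U, inducedDegree G U u
        = ∑ u ∈ U.erase v, inducedDegree G (U.erase v) u + 2 * inducedDegree G U v :=
          (sum_inducedDegree_erase_add G hv).symm
      _ ≤ #(U.erase v) * (2 * d) + 2 * d := by gcongr; exact ih _ (erase_ssubset hv)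
      _ = #U * (2 * d) := by rw [← card_erase_add_one hv, add_one_mul]

theorem IsDegenerate.mul_card_filter_lt_inducedDegree_le (hG : IsDegenerate G d) (c : ℕ)
    (U : Finset V) : c * #{v ∈ U | c * (2 * d) < inducedDegree G U v} ≤ #U :=
  mul_card_filter_nsmul_lt_le_card c (fun _ _ => Nat.zero_le _) (hG.sum_inducedDegree_le U)

theorem half_vertices_degree_le_four_d_general (hG : IsDegenerate G d) (U : Finset V) :
    (#U + 1) / 2 ≤ #{v ∈ U | inducedDegree G U v ≤ 4 * d} := by
  have high_degree : 2 * #{v ∈ U | ¬ inducedDegree G U v ≤ 4 * d} ≤ #U := by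
    simpa only [not_le, ← mul_assoc, Nat.reduceMul] using hG.mul_card_filter_lt_inducedDegree_le 2 U
  have partition := card_filter_add_card_filter_not (s := U) (inducedDegree G U · ≤ 4 * d)
  omega

end Degeneracy

/-- If `G` is `d`-degenerate, then for every nonempty subset `U` of the vertices at
least `⌈|U|/2⌉` vertices `v ∈ U` satisfy `deg_U(v) ≤ 4d` (so removing from `U` a half
of its vertices of lowest induced degree removes only vertices of induced degree at
most `4d`, and the median-based peeling process ADG-M produces a partial 4-approximate
degeneracy ordering). -/
theorem half_vertices_degree_le_four_d {V : Type*} [Fintype V] [DecidableEq V]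
    (G : SimpleGraph V) [DecidableRel G.Adj] (d : ℕ)
    (hdeg : ∀ U : Finset V, U.Nonempty →
      ∃ v ∈ U, (U.filter (fun u => G.Adj v u)).card ≤ d) :
    ∀ U : Finset V, U.Nonempty →
      (U.card + 1) / 2 ≤ (U.filter (fun v => (U.filter (fun u => G.Adj v u)).card ≤ 4 * d)).card :=
  fun U _ => half_vertices_degree_le_four_d_general hdeg U
end

section
/- In the ADG peeling process with parameter ε > 0, the total number of vertex slots processed over all iterations is linear in n: ∑_{i ≥ 0} |U_i| ≤ ((1+ε)/ε)·n. -/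
/-!
By Markov's inequality for the degrees in `G[U i]`, at most a fraction `1 / (1 + ε)` of the
vertices of `U i` have degree above `1 + ε` times the average, and these are the survivors of a
peeling step. Hence `|U i|` decays geometrically with ratio `1 / (1 + ε)`, and the geometric series
sums to `1 / (1 - 1 / (1 + ε)) = (1 + ε) / ε`.
-/

open Finset

theorem mul_card_filter_mul_average_lt_le_card {ι 𝕜 : Type*} [Field 𝕜] [LinearOrder 𝕜]
    [IsStrictOrderedRing 𝕜] {s : Finset ι} {f : ι → 𝕜} (hf : ∀ i ∈ s, 0 ≤ f i) (c : 𝕜) :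
    c * #{i ∈ s | c * ((∑ j ∈ s, f j) / #s) < f i} ≤ #s := by
  set avg := (∑ j ∈ s, f j) / (#s : 𝕜) with havg
  set above := {i ∈ s | c * avg < f i}
  obtain sum_f_eq_zero | sum_f_pos := (sum_nonneg hf).eq_or_lt'
  · have f_eq_zero : ∀ i ∈ s, f i = 0 := (sum_eq_zero_iff_of_nonneg hf).mp sum_f_eq_zero
    have above_eq_empty : above = ∅ := filter_eq_empty_iff.mpr fun i hi ↦ by
      simp [havg, sum_f_eq_zero, f_eq_zero i hi]
    simp [above_eq_empty]
  · have card_s_pos : (0 : 𝕜) < #s :=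
      Nat.cast_pos.mpr (nonempty_of_sum_ne_zero sum_f_pos.ne').card_pos
    have avg_pos : 0 < avg := div_pos sum_f_pos card_s_pos
    refine le_of_mul_le_mul_right ?_ avg_pos
    calc c * #above * avg
      _ = #above • (c * avg) := by rw [nsmul_eq_mul]; ring
      _ ≤ ∑ i ∈ above, f i := card_nsmul_le_sum _ _ _ fun i hi ↦ (mem_filter.mp hi).2.le
      _ ≤ ∑ i ∈ s, f i := sum_le_sum_of_subset_of_nonneg (filter_subset _ _) fun i hi _ ↦ hf i hi
      _ = #s * avg := (mul_div_cancel₀ _ card_s_pos.ne').symm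

theorem mul_card_sdiff_filter_degIn_le_card {V : Type*} [DecidableEq V] (G : SimpleGraph V)
    [DecidableRel G.Adj] (c : ℝ) (U : Finset V) :
    c * #(U \ {v ∈ U | (G.degIn U v : ℝ) ≤ c * G.avgDegIn U}) ≤ #U := by
  simp only [← filter_not, not_le]
  exact mul_card_filter_mul_average_lt_le_card (fun _ _ ↦ Nat.cast_nonneg _) c

theorem summable_and_tsum_le_of_succ_le_mul {a : ℕ → ℝ} {r : ℝ} (ha : ∀ i, 0 ≤ a i)
    (hr₀ : 0 ≤ r) (hr₁ : r < 1) (hstep : ∀ i, a (i + 1) ≤ r * a i) :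
    Summable a ∧ ∑' i, a i ≤ (1 - r)⁻¹ * a 0 := by
  have le_geometric (i : ℕ) : a i ≤ r ^ i * a 0 := le_geom hr₀ i fun k _ ↦ hstep k
  have geometric_hasSum := (hasSum_geometric_of_lt_one hr₀ hr₁).mul_right (a 0)
  have a_summable : Summable a := geometric_hasSum.summable.of_nonneg_of_le ha le_geometric
  exact ⟨a_summable, hasSum_le le_geometric a_summable.hasSum geometric_hasSum⟩

theorem adg_peeling_total_work_linear_general {V : Type*} [DecidableEq V] (G : SimpleGraph V)
    [DecidableRel G.Adj] {ε : ℝ} (hε : 0 < ε) {U : ℕ → Finset V}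
    (hUstep : ∀ i, U (i + 1) =
      U i \ {v ∈ U i | (G.degIn (U i) v : ℝ) ≤ (1 + ε) * G.avgDegIn (U i)}) :
    Summable (fun i ↦ (#(U i) : ℝ)) ∧ ∑' i, (#(U i) : ℝ) ≤ (1 + ε) / ε * #(U 0) := by
  have card_decay (i : ℕ) : (#(U (i + 1)) : ℝ) ≤ (1 + ε)⁻¹ * #(U i) := by
    rw [le_inv_mul_iff₀ (by positivity), hUstep i]
    exact mul_card_sdiff_filter_degIn_le_card G (1 + ε) (U i)
  have ratio_lt_one : (1 + ε)⁻¹ < 1 := inv_lt_one_of_one_lt₀ (by linarith)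
  have geometric_sum : (1 - (1 + ε)⁻¹)⁻¹ = (1 + ε) / ε := by
    rw [← inv_div]
    congr 1
    field_simp
    ring
  rw [← geometric_sum]
  exact summable_and_tsum_le_of_succ_le_mul (fun _ ↦ Nat.cast_nonneg _) (by positivity)
    ratio_lt_one card_decay

/-- In the ADG peeling process with parameter `ε > 0` (with `U 0 = V` and
`U (i+1) = U i \ R i`, where `R i` is the set of vertices of `U i` whose induced degree
is at most `(1+ε)` times the average induced degree of `U i`), the total number of
vertex slots processed over all iterations is linear in `n`:
`∑_{i ≥ 0} |U i| ≤ ((1+ε)/ε) · n`. -/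
theorem adg_peeling_total_work_linear {V : Type*} [Fintype V] [DecidableEq V]
    (G : SimpleGraph V) [DecidableRel G.Adj] (ε : ℝ) (hε : 0 < ε)
    (U : ℕ → Finset V)
    (hU0 : U 0 = Finset.univ)
    (hUstep : ∀ i, U (i + 1) =
      U i \ (U i).filter (fun v => (G.degIn (U i) v : ℝ) ≤ (1 + ε) * G.avgDegIn (U i))) :
    ∑' i : ℕ, ((U i).card : ℝ) ≤ ((1 + ε) / ε) * (Fintype.card V : ℝ) := by
  simpa only [hU0, card_univ] using (adg_peeling_total_work_linear_general G hε hUstep).2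
end
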